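/- Fix α = 1. Suppose that for every β > 0 eigen-data (P(β), H_β, ν_β) for (α,β) is given, with each H_β locally ring-constant, and let μ_β be the associated Gibbs measure. Then, as β → +∞, μ_β converges weakly to (1/(1+ρ²))·(ρ²·δ_{0^∞} + δ_{1^∞}), where ρ = (1+√5)/2 is the golden mean and δ_z denotes the Dirac measure at z. -/

import Mathlib

/-!
Fix `β` and write `Q = e^P - 1`, `x = e^{-β}`, `c = H|_[2]`. For a letter `a ∈ {0,1}` put `b = β`
if `a = 0` and `b = 3β` if `a = 1`, and let `u_a = ν {x₀ ≠ a}`.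

*Exact masses.* The eigenmeasure equation, tested on indicators of rings, gives
`ν [a^m *_a] = u_a e^{-b} e^{-mP} e^{b/2^m}`, and `ν [a^m] ≤ e^{-mP}`, so `a^∞` has no mass.
Let `h_m` be the value of `H` on `[a^m *_a]`, with `h_0 = c`. The eigenfunction equation is
`e^P h_m = e^{-b/2^(m+1)} h_{m+1} + K` with `K` independent of `m`. Multiplying the two recursions,
`h_m ν [a^m *_a] - K e^{-P} ν [a^m]` is independent of `m` and tends to `0`, so it vanishes; the case
`m = 0` identifies `K e^{-P} = c u_a`. Hence `∫_{[a^m *_a]} H dν = c u_a ν [a^m]` for `m ≥ 1`.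
Both `ν [a^m]` and `∫_{[a^m]} H dν` are thus tails of almost geometric series, and `tail_bounds`
applied twice yields (`letter_core`)
`1 - u_a = u_a e^{-b} (1/Q + E)` and `∫_[a] H dν = c u_a² e^{-b} (e^P/Q² + E')`
with `E, E' = O(b e^{b/2})`.

*Asymptotics.* Since `ν [0] + ν [1] + ν [2] = 1` with `ν [2] = e^{-P-β}`, the quantity `t = x²/Q`
satisfies `t² + t = 1 + o(1)`, so `t → 1/ρ` (`limits`). After multiplication by `x / c`, the masses
`∫_[a] H dν` for `a = 0, 1, 2` converge to `1`, `1/ρ²`, `0`, while each single ring has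
vanishing mass. So the mass in `[a]` concentrates at `a^∞` (`concentrate`), and the ratio `1 : 1/ρ²`
is the asserted one.
-/

open MeasureTheory Filter Topology

noncomputable section

/-- The full shift space `Σ = {0,1,2}^ℕ`. -/
abbrev Sig : Type := ℕ → Fin 3

/-- The shift map `σ`. -/
def shift (x : Sig) : Sig := fun n => x (n + 1)

/-- The fixed point `0^∞`. -/
def zeroSeq : Sig := fun _ => 0

/-- The fixed point `1^∞`. -/
def oneSeq : Sig := fun _ => 1

/-- Prepending a symbol: `a·x = (a, x₀, x₁, …)`. -/
def cons (a : Fin 3) (x : Sig) : Sig := fun n => Nat.casesOn n a x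

open Classical in
/-- The metric `d(x,y) = (1/2)^(min{n : x n ≠ y n})`, with `d(x,x) = 0`. -/
def dist3 (x y : Sig) : ℝ :=
  if h : x ≠ y then (1 / 2 : ℝ) ^ Nat.find (Function.ne_iff.mp h) else 0

/-- The potential `A_α`. -/
def pot (α : ℝ) (x : Sig) : ℝ :=
  if x 0 = 0 then -dist3 x zeroSeq
  else if x 0 = 1 then -(3 * dist3 x oneSeq)
  else -α

/-- The transfer operator `L_β` (for parameter `α`). -/
def transfer (α β : ℝ) (f : Sig → ℝ) : Sig → ℝ :=
  fun x => ∑ a : Fin 3, Real.exp (β * pot α (cons a x)) * f (cons a x)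

/-- The ring `[a^n *_a] = {x : x_i = a for i < n, x_n ≠ a}`. -/
def ringSet (a : Fin 3) (n : ℕ) : Set Sig := {x | (∀ i < n, x i = a) ∧ x n ≠ a}

/-- The cylinder `[a] = {x : x₀ = a}`. -/
def cyl (a : Fin 3) : Set Sig := {x | x 0 = a}

/-- `H` is locally ring-constant: constant on `[2]` and on each ring `[0^m*₀]`, `[1^m*₁]`. -/
def LocallyRingConstant (H : Sig → ℝ) : Prop :=
  (∀ x ∈ cyl 2, ∀ y ∈ cyl 2, H x = H y) ∧
  (∀ m : ℕ, 1 ≤ m → ∀ x ∈ ringSet 0 m, ∀ y ∈ ringSet 0 m, H x = H y) ∧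
  (∀ m : ℕ, 1 ≤ m → ∀ x ∈ ringSet 1 m, ∀ y ∈ ringSet 1 m, H x = H y)

/-- An eigen-measure for `(α,β)` with exponent `P`:  a Borel probability measure `ν`
with `P > 0` and `∫ L_β f dν = e^P ∫ f dν` for every continuous `f`. -/
structure IsEigenMeasure (α β P : ℝ) (ν : Measure Sig) : Prop where
  P_pos : 0 < P
  prob : IsProbabilityMeasure ν
  eigenMeas : ∀ f : Sig → ℝ, Continuous f →
    ∫ x, transfer α β f x ∂ν = Real.exp P * ∫ x, f x ∂ν

/-- Eigen-data `(P, H, ν)` for `(α,β)`. -/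
structure IsEigenData (α β P : ℝ) (H : Sig → ℝ) (ν : Measure Sig) : Prop where
  P_pos : 0 < P
  H_cont : Continuous H
  H_pos : ∀ x, 0 < H x
  eigenFun : ∀ x, transfer α β H x = Real.exp P * H x
  prob : IsProbabilityMeasure ν
  eigenMeas : ∀ f : Sig → ℝ, Continuous f →
    ∫ x, transfer α β f x ∂ν = Real.exp P * ∫ x, f x ∂ν

/-- The Gibbs measure `μ(B) = (∫_B H dν)/(∫ H dν)`. -/
def gibbs (H : Sig → ℝ) (ν : Measure Sig) : Measure Sig :=
  (ν.withDensity (fun x => ENNReal.ofReal (H x)) Set.univ)⁻¹ •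
    ν.withDensity (fun x => ENNReal.ofReal (H x))

/-- Weak convergence (as `β → +∞`) of a family of measures to a measure `μ∞`:
convergence of integrals of every bounded continuous function. -/
def WeakLimit (μ : ℝ → Measure Sig) (μlim : Measure Sig) : Prop :=
  ∀ f : Sig → ℝ, Continuous f → (∃ C : ℝ, ∀ x, |f x| ≤ C) →
    Tendsto (fun β => ∫ x, f x ∂(μ β)) atTop (nhds (∫ x, f x ∂μlim))

/-- `F(Z,β) = Σ_{k=0}^∞ e^{−kZ}·e^{β/2^{k+1}}`. -/
def Ffun (Z β : ℝ) : ℝ := ∑' k : ℕ, Real.exp (-(k : ℝ) * Z) * Real.exp (β / 2 ^ (k + 1))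

/-- `Fpartial Z β m = F_{m-1}(Z,β) = Σ_{k=0}^{m-1} e^{−kZ}·e^{β/2^{k+1}}` (so `Fpartial Z β 0 = F_{-1} = 0`). -/
def Fpartial (Z β : ℝ) (m : ℕ) : ℝ :=
  ∑ k ∈ Finset.range m, Real.exp (-(k : ℝ) * Z) * Real.exp (β / 2 ^ (k + 1))

/-- The cylinder `[a^m] = {x : x_i = a for i < m}`. -/
def blk (a : Fin 3) (m : ℕ) : Set Sig := {x | ∀ i < m, x i = a}

/-- The sample point `a^m 2^∞`, which lies in `[a^m *_a]` when `a ≠ 2`. -/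
def pt (a : Fin 3) (m : ℕ) : Sig := fun n => if n < m then a else 2

/-! ### Combinatorics of rings and cylinders -/

lemma isClopen_coord (i : ℕ) (a : Fin 3) : IsClopen {x : Sig | x i = a} := by
  have : {x : Sig | x i = a} = (fun x : Sig => x i) ⁻¹' {a} := rfl
  rw [this]
  exact (isClopen_discrete _).preimage (continuous_apply i)

lemma isClopen_blk (a : Fin 3) (m : ℕ) : IsClopen (blk a m) := by
  induction m with
  | zero => convert isClopen_univ; ext; simp [blk]
  | succ m ih =>
    have : blk a (m + 1) = blk a m ∩ {x | x m = a} := by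
      ext x; simp only [blk, Set.mem_ofPred_eq, Set.mem_inter_iff]
      exact Nat.forall_lt_succ_right
    rw [this]; exact ih.inter (isClopen_coord m a)

lemma ringSet_eq (a : Fin 3) (m : ℕ) : ringSet a m = blk a m ∩ {x | x m = a}ᶜ := rfl

lemma isClopen_ringSet (a : Fin 3) (m : ℕ) : IsClopen (ringSet a m) :=
  (isClopen_blk a m).inter (isClopen_coord m a).compl

lemma blk_eq_union (a : Fin 3) (m : ℕ) : blk a m = ringSet a m ∪ blk a (m + 1) := by
  ext x
  simp only [blk, ringSet, Set.mem_ofPred_eq, Set.mem_union]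
  rw [Nat.forall_lt_succ_right]
  tauto

lemma disjoint_ring_blk (a : Fin 3) (m : ℕ) : Disjoint (ringSet a m) (blk a (m + 1)) := by
  rw [Set.disjoint_left]
  exact fun x hx hx' => hx.2 (hx' m (Nat.lt_succ_self m))

lemma cons_mem_ringSet (a a' : Fin 3) (m : ℕ) (x : Sig) :
    cons a' x ∈ ringSet a (m + 1) ↔ a' = a ∧ x ∈ ringSet a m := by
  simp only [ringSet, Set.mem_ofPred_eq, Nat.forall_lt_succ_left, cons]
  tauto

lemma cons_mem_blk (a a' : Fin 3) (m : ℕ) (x : Sig) :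
    cons a' x ∈ blk a (m + 1) ↔ a' = a ∧ x ∈ blk a m := by
  simp only [blk, Set.mem_ofPred_eq, Nat.forall_lt_succ_left, cons]
  exact Iff.rfl

lemma pt_mem_ringSet {a : Fin 3} (ha : a ≠ 2) (m : ℕ) : pt a m ∈ ringSet a m :=
  ⟨fun i hi => by simp [pt, hi], by simpa [pt] using ha.symm⟩

lemma cons_pt (a : Fin 3) (m : ℕ) : cons a (pt a m) = pt a (m + 1) := by
  funext n; cases n <;> simp [cons, pt]

/-! ### The potential -/

lemma dist3_of_mem_ring {a : Fin 3} {m : ℕ} {x : Sig} (hx : x ∈ ringSet a m) :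
    dist3 x (fun _ => a) = (1 / 2 : ℝ) ^ m := by
  have hne : x ≠ fun _ => a := fun h => hx.2 (congrFun h m)
  rw [dist3, dif_pos hne]
  congr 1
  rw [Nat.find_eq_iff]
  exact ⟨hx.2, fun n hn => not_not.mpr (hx.1 n hn)⟩

lemma dist3_nonneg (x y : Sig) : 0 ≤ dist3 x y := by
  unfold dist3; split_ifs <;> positivity

lemma pot_zero_ring {m : ℕ} {x : Sig} (hx : x ∈ ringSet 0 m) :
    pot 1 (cons 0 x) = -(1 / 2 ^ (m + 1)) := by
  have h := dist3_of_mem_ring ((cons_mem_ringSet 0 0 m x).2 ⟨rfl, hx⟩)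
  have h' : dist3 (cons 0 x) zeroSeq = (1 / 2 : ℝ) ^ (m + 1) := h
  simp [pot, cons] at h' ⊢
  exact h'

lemma pot_one_ring {m : ℕ} {x : Sig} (hx : x ∈ ringSet 1 m) :
    pot 1 (cons 1 x) = -(3 / 2 ^ (m + 1)) := by
  have h := dist3_of_mem_ring ((cons_mem_ringSet 1 1 m x).2 ⟨rfl, hx⟩)
  have h' : dist3 (cons 1 x) oneSeq = (1 / 2 : ℝ) ^ (m + 1) := h
  have h1 : pot 1 (cons 1 x) = -(3 * dist3 (cons 1 x) oneSeq) := by simp [pot, cons]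
  rw [h1, h']; simp [div_eq_mul_inv]

lemma pot_two (x : Sig) : pot 1 (cons 2 x) = -1 := by simp [pot, cons]

lemma pot_nonpos (x : Sig) : pot 1 x ≤ 0 := by
  have h0 := dist3_nonneg x zeroSeq
  have h1 := dist3_nonneg x oneSeq
  unfold pot; split_ifs <;> linarith

/-! ### Elementary sequence estimates -/

/-- A tail `t` of a series whose terms `s m` lie between `A r^m` and `A r^m + B / 2^m` inherits
bounds of the same shape: `t m` is squeezed between the tails of the bounding series. -/
lemma tail_bounds {t s : ℕ → ℝ} {r A B : ℝ} (hr0 : 0 < r) (hr1 : r < 1)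
    (hts : ∀ m, 1 ≤ m → t m - t (m + 1) = s m) (ht : Tendsto t atTop (𝓝 0))
    (hlo : ∀ m, 1 ≤ m → A * r ^ m ≤ s m) (hhi : ∀ m, 1 ≤ m → s m ≤ A * r ^ m + B / 2 ^ m)
    (m : ℕ) (hm : 1 ≤ m) :
    A / (1 - r) * r ^ m ≤ t m ∧ t m ≤ A / (1 - r) * r ^ m + 2 * B / 2 ^ m := by
  have h1r : 1 - r ≠ 0 := by linarith
  have hpow : Tendsto (fun n : ℕ => r ^ n) atTop (𝓝 0) :=
    tendsto_pow_atTop_nhds_zero_of_lt_one hr0.le hr1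
  have hpow2 : Tendsto (fun n : ℕ => ((1 : ℝ) / 2) ^ n) atTop (𝓝 0) :=
    tendsto_pow_atTop_nhds_zero_of_lt_one (by norm_num) (by norm_num)
  have hA : ∀ n : ℕ, A / (1 - r) * r ^ n - A / (1 - r) * r ^ (n + 1) = A * r ^ n := by
    intro n; field_simp; ring
  constructor
  · have hd : Antitone (fun n => t (n + m) - A / (1 - r) * r ^ (n + m)) := by
      apply antitone_nat_of_succ_le
      intro n
      have e1 := hts (n + m) (by omega)
      have e2 := hlo (n + m) (by omega)
      have e3 := hA (n + m)
      rw [show n + 1 + m = n + m + 1 by ring]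
      linarith
    have hlim : Tendsto (fun n => t (n + m) - A / (1 - r) * r ^ (n + m)) atTop (𝓝 0) := by
      have := (ht.sub (hpow.const_mul (A / (1 - r)))).comp (tendsto_add_atTop_nat m)
      simpa [Function.comp_def] using this
    have := hd.le_of_tendsto hlim 0
    simp only [zero_add] at this
    linarith
  · have hd : Monotone (fun n => t (n + m) - A / (1 - r) * r ^ (n + m) - 2 * B * (1 / 2) ^ (n + m)) := by
      apply monotone_nat_of_le_succ
      intro n
      have e1 := hts (n + m) (by omega)
      have e2 := hhi (n + m) (by omega)
      have e3 := hA (n + m)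
      have e4 : B / 2 ^ (n + m) = 2 * B * (1 / 2) ^ (n + m) - 2 * B * (1 / 2) ^ (n + m + 1) := by
        rw [pow_succ, one_div, inv_pow]; field_simp; ring
      rw [show n + 1 + m = n + m + 1 by ring]
      linarith
    have hlim : Tendsto (fun n => t (n + m) - A / (1 - r) * r ^ (n + m) - 2 * B * (1 / 2) ^ (n + m))
        atTop (𝓝 0) := by
      have := ((ht.sub (hpow.const_mul (A / (1 - r)))).sub (hpow2.const_mul (2 * B))).comp
        (tendsto_add_atTop_nat m)
      simpa [Function.comp_def] using this
    have := hd.ge_of_tendsto hlim 0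
    simp only [zero_add] at this
    have e4 : 2 * B / 2 ^ m = 2 * B * (1 / 2) ^ m := by
      rw [one_div, inv_pow]; field_simp
    linarith

lemma exp_ring_bounds {b : ℝ} (hb : 0 < b) {m : ℕ} (hm : 1 ≤ m) :
    1 ≤ Real.exp (b / 2 ^ m) ∧ Real.exp (b / 2 ^ m) ≤ 1 + b * Real.exp (b / 2) / 2 ^ m := by
  have hy : 0 < b / 2 ^ m := by positivity
  refine ⟨Real.one_le_exp hy.le, ?_⟩
  have h1 : b / 2 ^ m ≤ b / 2 := by
    apply div_le_div_of_nonneg_left hb.le (by norm_num)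
    calc (2 : ℝ) = 2 ^ 1 := by norm_num
      _ ≤ 2 ^ m := pow_le_pow_right₀ (by norm_num) hm
  have h2 : Real.exp (b / 2 ^ m) ≤ 1 + b / 2 ^ m * Real.exp (b / 2 ^ m) := by
    have h3 := Real.add_one_le_exp (-(b / 2 ^ m))
    have h4 := Real.exp_pos (b / 2 ^ m)
    have h5 : Real.exp (-(b / 2 ^ m)) * Real.exp (b / 2 ^ m) = 1 := by
      rw [← Real.exp_add]; simp
    nlinarith
  calc Real.exp (b / 2 ^ m) ≤ 1 + b / 2 ^ m * Real.exp (b / 2 ^ m) := h2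
    _ ≤ 1 + b / 2 ^ m * Real.exp (b / 2) := by gcongr
    _ = _ := by ring

/-! ### Integrals against the eigenmeasure -/

lemma integrable_of_cont {ν : Measure Sig} [IsProbabilityMeasure ν] {f : Sig → ℝ}
    (hf : Continuous f) : Integrable f ν :=
  hf.integrable_of_hasCompactSupport (HasCompactSupport.of_compactSpace f)

lemma indicator_cont {s : Set Sig} (hs : IsClopen s) :
    Continuous (s.indicator (1 : Sig → ℝ)) :=
  hs.continuous_indicator continuous_one

/-- The eigenmeasure equation for the indicator of `[a^(m+1) *_a]`. -/
lemma measure_ring_succ {β P : ℝ} {H : Sig → ℝ} {ν : Measure Sig}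
    (hE : IsEigenData 1 β P H ν) {a : Fin 3} {b : ℝ}
    (hpot : ∀ m x, x ∈ ringSet a m → β * pot 1 (cons a x) = -(b / 2 ^ (m + 1))) (m : ℕ) :
    Real.exp P * ν.real (ringSet a (m + 1)) =
      Real.exp (-(b / 2 ^ (m + 1))) * ν.real (ringSet a m) := by
  have h := hE.eigenMeas _ (indicator_cont (isClopen_ringSet a (m + 1)))
  rw [integral_indicator_one (isClopen_ringSet a (m + 1)).isOpen.measurableSet] at h
  rw [← h, ← integral_indicator_one (isClopen_ringSet a m).isOpen.measurableSet, ← integral_const_mul]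
  congr 1
  funext x
  simp only [transfer]
  rw [Finset.sum_eq_single a]
  · by_cases hx : x ∈ ringSet a m
    · rw [hpot m x hx]; simp [Set.indicator, cons_mem_ringSet, hx]
    · simp [Set.indicator, cons_mem_ringSet, hx]
  · intro a' _ ha'
    simp [Set.indicator, cons_mem_ringSet, ha']
  · simp

/-- Each extra letter `a` costs at least a factor `e^{-P}`, so `ν [a^m] → 0` and the fixed
point `a^∞` carries no mass. -/
lemma measure_blk_le {β P : ℝ} {H : Sig → ℝ} {ν : Measure Sig}
    (hE : IsEigenData 1 β P H ν) (hβ : 0 < β) (a : Fin 3) (m : ℕ) :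
    ν.real (blk a m) ≤ Real.exp (-P) ^ m := by
  have := hE.prob
  induction m with
  | zero => simp
  | succ m ih =>
    have h := hE.eigenMeas _ (indicator_cont (isClopen_blk a (m + 1)))
    rw [integral_indicator_one (isClopen_blk a (m + 1)).isOpen.measurableSet] at h
    have hle : ∫ x, transfer 1 β ((blk a (m + 1)).indicator 1) x ∂ν ≤ ν.real (blk a m) := by
      rw [← integral_indicator_one (isClopen_blk a m).isOpen.measurableSet]
      apply integral_mono_of_nonneg
      · refine Eventually.of_forall fun x => Finset.sum_nonneg fun a' _ => ?_
        exact mul_nonneg (Real.exp_pos _).le (Set.indicator_nonneg (fun _ _ => zero_le_one) _)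
      · exact integrable_of_cont (indicator_cont (isClopen_blk a m))
      · refine Eventually.of_forall fun x => ?_
        simp only [transfer]
        rw [Finset.sum_eq_single a]
        · by_cases hx : x ∈ blk a m
          · simp only [Set.indicator, cons_mem_blk, hx, and_self, if_true, Pi.one_apply, mul_one]
            rw [Real.exp_le_one_iff]
            exact mul_nonpos_of_nonneg_of_nonpos hβ.le (pot_nonpos _)
          · simp [Set.indicator, cons_mem_blk, hx]
        · intro a' _ ha'
          simp [Set.indicator, cons_mem_blk, ha']
        · simp
    rw [h] at hle
    have hr : Real.exp (-P) * Real.exp P = 1 := by rw [← Real.exp_add]; simp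
    calc ν.real (blk a (m + 1)) = Real.exp (-P) * (Real.exp P * ν.real (blk a (m + 1))) := by
          rw [← mul_assoc, hr, one_mul]
      _ ≤ Real.exp (-P) * Real.exp (-P) ^ m :=
          mul_le_mul_of_nonneg_left (hle.trans ih) (Real.exp_pos _).le
      _ = _ := by ring

lemma measure_two {β P : ℝ} {H : Sig → ℝ} {ν : Measure Sig} (hE : IsEigenData 1 β P H ν) :
    Real.exp P * ν.real (cyl 2) = Real.exp (-β) := by
  have := hE.prob
  have hc : IsClopen (cyl 2) := isClopen_coord 0 2
  have h := hE.eigenMeas _ (indicator_cont hc)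
  rw [integral_indicator_one hc.isOpen.measurableSet] at h
  rw [← h]
  have : transfer 1 β ((cyl 2).indicator 1) = fun _ => Real.exp (-β) := by
    funext x
    have hm : ∀ a : Fin 3, cons a x ∈ cyl 2 ↔ a = 2 := fun a => Iff.rfl
    simp only [transfer]
    rw [Finset.sum_eq_single 2]
    · rw [pot_two]; simp [Set.indicator, hm]
    · intro a' _ ha'; simp [Set.indicator, hm, ha']
    · simp
  rw [this]; simp

lemma setIntegral_blk {ν : Measure Sig} [IsProbabilityMeasure ν] {f : Sig → ℝ}
    (hf : Continuous f) (a : Fin 3) (m : ℕ) :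
    ∫ x in blk a m, f x ∂ν = ∫ x in ringSet a m, f x ∂ν + ∫ x in blk a (m + 1), f x ∂ν := by
  rw [blk_eq_union, setIntegral_union (disjoint_ring_blk a m)
    (isClopen_blk a (m + 1)).isOpen.measurableSet (integrable_of_cont hf).integrableOn
    (integrable_of_cont hf).integrableOn]

/-- The exact mass computation for one letter. Here `b` is `β` for the letter `0` and `3β` for
the letter `1`, `h m` is the value of `H` on `[a^m *_a]` (with `h 0 = H|_[2]`), and
`u = ν {x₀ ≠ a}`. With `Q = e^P - 1`, both `ν [a]` and `∫_[a] H dν` equal explicit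
rational expressions up to errors `E`, `E'` which are `O(b e^{b/2})`. -/
lemma letter_core {β P : ℝ} {H : Sig → ℝ} {ν : Measure Sig}
    (hE : IsEigenData 1 β P H ν) (hβ : 0 < β) {a : Fin 3} {b : ℝ} (hb : 0 < b)
    (hpot : ∀ m x, x ∈ ringSet a m → β * pot 1 (cons a x) = -(b / 2 ^ (m + 1)))
    {K : ℝ} {h : ℕ → ℝ} (hpos : ∀ m, 0 < h m)
    (hh : ∀ m, 1 ≤ m → ∀ x ∈ ringSet a m, H x = h m)
    (hbd : ∃ C, ∀ m, h m ≤ C)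
    (hrec : ∀ m, Real.exp P * h m = Real.exp (-(b / 2 ^ (m + 1))) * h (m + 1) + K) :
    ∃ E E' : ℝ, 0 ≤ E ∧ E ≤ b * Real.exp (b / 2) ∧ 0 ≤ E' ∧ E' ≤ 2 * (b * Real.exp (b / 2)) ∧
      0 < ν.real (ringSet a 0) ∧
      ν.real (blk a 1) = 1 - ν.real (ringSet a 0) ∧
      1 - ν.real (ringSet a 0) =
        ν.real (ringSet a 0) * Real.exp (-b) * (1 / (Real.exp P - 1) + E) ∧
      ∫ x in blk a 1, H x ∂ν = h 0 * ν.real (ringSet a 0) ^ 2 * Real.exp (-b) *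
        (Real.exp P / (Real.exp P - 1) ^ 2 + E') ∧
      ∀ M : ℕ, ∫ x in blk a 1, H x ∂ν - ∫ x in blk a (M + 1), H x ∂ν ≤
        M * (h 0 * ν.real (ringSet a 0)) := by
  have := hE.prob
  have hP := hE.P_pos
  set r := Real.exp (-P) with hr
  have hr0 : 0 < r := Real.exp_pos _
  have hr1 : r < 1 := by rw [hr, Real.exp_lt_one_iff]; linarith
  have heP : Real.exp P = 1 / r := by rw [hr, Real.exp_neg]; simp
  set u := ν.real (ringSet a 0) with hu
  have hu0 : 0 ≤ u := measureReal_nonneg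
  -- the tails `t m = ν [a^m]`
  have ht : ∀ m, ν.real (blk a m) - ν.real (blk a (m + 1)) = ν.real (ringSet a m) := by
    intro m
    rw [blk_eq_union a m, measureReal_union (disjoint_ring_blk a m)
      (isClopen_blk a (m + 1)).isOpen.measurableSet]
    ring
  have htl : Tendsto (fun m => ν.real (blk a m)) atTop (𝓝 0) :=
    squeeze_zero (fun _ => measureReal_nonneg) (measure_blk_le hE hβ a)
      (tendsto_pow_atTop_nhds_zero_of_lt_one hr0.le hr1)
  have ht0 : ν.real (blk a 0) = 1 := by simp [blk]
  have ht1 : ν.real (blk a 1) = 1 - u := by have := ht 0; rw [zero_add, ht0] at this; linarith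
  -- ring masses
  have hν : ∀ m, ν.real (ringSet a m) = u * Real.exp (-b) * (r ^ m * Real.exp (b / 2 ^ m)) := by
    intro m
    induction m with
    | zero =>
      have : Real.exp (-b) * Real.exp b = 1 := by rw [← Real.exp_add]; simp
      simp [mul_assoc, this, hu]
    | succ m ih =>
      have h1 := measure_ring_succ hE hpot m
      have h2 : Real.exp (-(b / 2 ^ (m + 1))) * Real.exp (b / 2 ^ m) =
          Real.exp (b / 2 ^ (m + 1)) := by
        rw [← Real.exp_add]; congr 1; rw [pow_succ]; field_simp; ring
      rw [ih, heP] at h1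
      field_simp at h1
      rw [h1, ← h2]; ring
  have hA : 0 ≤ u * Real.exp (-b) := by positivity
  have hlo : ∀ m, 1 ≤ m → u * Real.exp (-b) * r ^ m ≤ ν.real (ringSet a m) := by
    intro m hm
    rw [hν]
    refine mul_le_mul_of_nonneg_left ?_ hA
    exact le_mul_of_one_le_right (by positivity) (exp_ring_bounds hb hm).1
  have hhi : ∀ m, 1 ≤ m → ν.real (ringSet a m) ≤
      u * Real.exp (-b) * r ^ m + u * Real.exp (-b) * (b * Real.exp (b / 2)) / 2 ^ m := by
    intro m hm
    rw [hν, mul_div_assoc, ← mul_add]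
    refine mul_le_mul_of_nonneg_left ?_ hA
    have h1 := (exp_ring_bounds hb hm).2
    have h2 : r ^ m ≤ 1 := pow_le_one₀ hr0.le hr1.le
    have h3 : 0 ≤ b * Real.exp (b / 2) / 2 ^ m := by positivity
    have h4 : 0 < r ^ m := by positivity
    nlinarith
  have hT := tail_bounds hr0 hr1 (fun m _ => ht m) htl hlo hhi
  have hT1 := hT 1 le_rfl
  rw [ht1] at hT1
  have hupos : 0 < u := by
    rcases hu0.lt_or_eq with h | h
    · exact h
    · rw [← h] at hT1; norm_num at hT1
  -- `h m * ν [a^m *_a] - K e^{-P} ν [a^m]` does not depend on `m` and tends to zero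
  obtain ⟨C, hC⟩ := hbd
  have hq : ∀ m, h m * ν.real (ringSet a m) = K * r * ν.real (blk a m) := by
    have hst : ∀ m, h m * ν.real (ringSet a m) - K * r * ν.real (blk a m) =
        h (m + 1) * ν.real (ringSet a (m + 1)) - K * r * ν.real (blk a (m + 1)) := by
      intro m
      have h1 := measure_ring_succ hE hpot m
      have h2 := hrec m
      have h3 := ht m
      rw [heP] at h1 h2
      field_simp at h1 h2
      rw [h1, h2]
      linear_combination (-K * r) * h3
    have hl : Tendsto (fun m => h m * ν.real (ringSet a m) - K * r * ν.real (blk a m))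
        atTop (𝓝 0) := by
      have h1 : Tendsto (fun m => h m * ν.real (ringSet a m)) atTop (𝓝 0) := by
        refine squeeze_zero (fun m => mul_nonneg (hpos m).le measureReal_nonneg)
          (fun m => ?_) (by simpa using htl.const_mul C)
        have h2 := ht m
        have h3 : 0 ≤ ν.real (blk a (m + 1)) := measureReal_nonneg
        exact mul_le_mul (hC m) (by linarith) measureReal_nonneg ((hpos m).le.trans (hC m))
      simpa using h1.sub (htl.const_mul (K * r))
    intro m
    have hconst : ∀ n, h (n + m) * ν.real (ringSet a (n + m)) - K * r * ν.real (blk a (n + m)) =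
        h m * ν.real (ringSet a m) - K * r * ν.real (blk a m) := by
      intro n
      induction n with
      | zero => simp
      | succ n ih => rw [← ih, hst (n + m), show n + 1 + m = n + m + 1 by ring]
    have h2 := hl.comp (tendsto_add_atTop_nat m)
    have h3 := tendsto_nhds_unique h2 (tendsto_const_nhds.congr fun n => (hconst n).symm)
    linarith
  have hK : K * r = h 0 * u := by have := hq 0; rw [ht0] at this; linarith
  have hring : ∀ m, 1 ≤ m → ∫ x in ringSet a m, H x ∂ν = h 0 * u * ν.real (blk a m) := by
    intro m hm
    rw [setIntegral_congr_fun (isClopen_ringSet a m).isOpen.measurableSet (hh m hm)]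
    rw [setIntegral_const, smul_eq_mul, mul_comm, hq, hK]
  have hJ : ∀ m, 1 ≤ m → ∫ x in blk a m, H x ∂ν - ∫ x in blk a (m + 1), H x ∂ν =
      h 0 * u * ν.real (blk a m) := by
    intro m hm
    rw [setIntegral_blk hE.H_cont a m, hring m hm]; ring
  have hc := hpos 0
  have hJl : Tendsto (fun m => ∫ x in blk a m, H x ∂ν) atTop (𝓝 0) := by
    obtain ⟨D, hD⟩ := isCompact_univ.exists_bound_of_continuousOn hE.H_cont.continuousOn
    refine squeeze_zero_norm (fun m => ?_) (by simpa using htl.const_mul D)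
    exact norm_setIntegral_le_of_norm_le_const (measure_lt_top _ _) (fun x _ => hD x trivial)
  have hcu : 0 < h 0 * u := by positivity
  have hJ1 := tail_bounds (A := h 0 * u * (u * Real.exp (-b) / (1 - r)))
    (B := h 0 * u * (2 * (u * Real.exp (-b) * (b * Real.exp (b / 2))))) hr0 hr1 hJ hJl
    (fun m hm => by rw [mul_assoc]; exact mul_le_mul_of_nonneg_left (hT m hm).1 hcu.le)
    (fun m hm => by
      exact (mul_le_mul_of_nonneg_left (hT m hm).2 hcu.le).trans_eq (by ring)) 1 le_rfl
  have h1r : 0 < 1 - r := by linarith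
  have hQ : Real.exp P - 1 = (1 - r) / r := by rw [heP]; field_simp
  rw [hQ, heP]
  have hue : 0 < u * Real.exp (-b) := by positivity
  have hD : 0 < h 0 * u ^ 2 * Real.exp (-b) := by positivity
  refine ⟨(1 - u) / (u * Real.exp (-b)) - 1 / ((1 - r) / r),
    (∫ x in blk a 1, H x ∂ν) / (h 0 * u ^ 2 * Real.exp (-b)) - 1 / r / ((1 - r) / r) ^ 2,
    ?_, ?_, ?_, ?_, hupos, ht1, ?_, ?_, ?_⟩
  · rw [sub_nonneg, le_div_iff₀ hue]
    refine le_of_eq_of_le ?_ hT1.1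
    field_simp
  · rw [sub_le_iff_le_add, div_le_iff₀ hue]
    refine hT1.2.trans_eq ?_
    field_simp
    ring
  · rw [sub_nonneg, le_div_iff₀ hD]
    refine le_of_eq_of_le ?_ hJ1.1
    field_simp
  · rw [sub_le_iff_le_add, div_le_iff₀ hD]
    refine hJ1.2.trans_eq ?_
    field_simp
    ring
  · rw [add_sub_cancel]; field_simp
  · rw [add_sub_cancel]; field_simp
  · intro M
    induction M with
    | zero => simp
    | succ M ih =>
      have h1 := hJ (M + 1) (by omega)
      have h2 : ν.real (blk a (M + 1)) ≤ 1 := measureReal_le_one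
      have h3 := mul_le_of_le_one_right hcu.le h2
      push_cast
      linarith

/-! ### Asymptotics of the pressure and of the masses -/

lemma tendsto_mul_exp_half : Tendsto (fun β : ℝ => 6 * (β * Real.exp (-(β / 2)))) atTop (𝓝 0) := by
  have h := (Real.tendsto_pow_mul_exp_neg_atTop_nhds_zero 1).comp
    (tendsto_id.atTop_div_const (show (0 : ℝ) < 2 by norm_num))
  have h2 := h.const_mul 12
  simp only [mul_zero] at h2
  refine h2.congr fun β => ?_
  simp only [Function.comp, id, pow_one]; ring

/-- The golden-mean asymptotics. Put `x = e^{-β}` and `t = x² / Q`. The three masses of the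
eigenmeasure add up to one, which reads `t² + t = 1 + o(1)`; hence `t → 1/ρ`, and
the rescaled masses of `[0]` and `[1]` converge to `1` and `1/ρ²`. -/
lemma limits {Q u v E0 E1 F0 F1 : ℝ → ℝ}
    (hQ : ∀ β > 0, 0 < Q β) (hu : ∀ β > 0, 0 < u β) (hv : ∀ β > 0, 0 < v β)
    (hE0 : ∀ β > 0, 0 ≤ E0 β) (hE0' : ∀ β > 0, E0 β ≤ β * Real.exp (β / 2))
    (hE1 : ∀ β > 0, 0 ≤ E1 β) (hE1' : ∀ β > 0, E1 β ≤ 3 * β * Real.exp (3 * β / 2))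
    (hF0 : ∀ β > 0, 0 ≤ F0 β) (hF0' : ∀ β > 0, F0 β ≤ 2 * (β * Real.exp (β / 2)))
    (hF1 : ∀ β > 0, 0 ≤ F1 β) (hF1' : ∀ β > 0, F1 β ≤ 2 * (3 * β * Real.exp (3 * β / 2)))
    (hue : ∀ β > 0, 1 - u β = u β * Real.exp (-β) * (1 / Q β + E0 β))
    (hve : ∀ β > 0, 1 - v β = v β * Real.exp (-(3 * β)) * (1 / Q β + E1 β))
    (hs : ∀ β > 0, (1 - u β) + (1 - v β) + Real.exp (-β) / (1 + Q β) = 1)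
    {g : ℝ} (hg : 0 < g) (hg2 : g ^ 2 + g = 1) :
    Tendsto (fun β => u β ^ 2 * Real.exp (-β) ^ 2 * ((1 + Q β) / Q β ^ 2 + F0 β)) atTop (𝓝 1) ∧
    Tendsto (fun β => v β ^ 2 * Real.exp (-β) ^ 4 * ((1 + Q β) / Q β ^ 2 + F1 β)) atTop
      (𝓝 (g ^ 2)) ∧
    Tendsto (fun β => Real.exp (-β) ^ 2 / (1 + Q β)) atTop (𝓝 0) ∧
    Tendsto (fun β => Real.exp (-β) * u β) atTop (𝓝 0) ∧
    Tendsto (fun β => Real.exp (-β) * v β) atTop (𝓝 0) := by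
  set x : ℝ → ℝ := fun β => Real.exp (-β) with hx
  have hx0 : ∀ β, 0 < x β := fun β => Real.exp_pos _
  have hxl : Tendsto x atTop (𝓝 0) := Real.tendsto_exp_neg_atTop_nhds_zero
  have hpos : ∀ᶠ β : ℝ in atTop, 0 < β := eventually_gt_atTop 0
  have hx3 : ∀ β, Real.exp (-(3 * β)) = x β ^ 3 := by
    intro β; rw [hx, ← Real.exp_nat_mul]; congr 1; push_cast; ring
  have hx2 : ∀ β, x β ^ 2 = Real.exp (-(2 * β)) := by
    intro β; rw [hx, ← Real.exp_nat_mul]; congr 1; push_cast; ring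
  -- all error terms are dominated by `6 β e^{-β/2}` after rescaling
  have hxe3 : ∀ β, x β ^ 2 * Real.exp (3 * β / 2) = Real.exp (-(β / 2)) := by
    intro β; rw [hx2, ← Real.exp_add]; congr 1; ring
  have hxe1 : ∀ β > 0, x β ^ 2 * Real.exp (β / 2) ≤ Real.exp (-(β / 2)) := by
    intro β hβ; rw [← hxe3]
    have : Real.exp (β / 2) ≤ Real.exp (3 * β / 2) := Real.exp_le_exp.2 (by linarith)
    gcongr
  have hxle : ∀ β > 0, x β ≤ 1 := fun β hβ => Real.exp_le_one_iff.2 (by linarith)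
  have small : ∀ E : ℝ → ℝ, (∀ β > 0, 0 ≤ E β) →
      ((∀ β > 0, E β ≤ 2 * (β * Real.exp (β / 2))) ∨
        (∀ β > 0, E β ≤ 2 * (3 * β * Real.exp (3 * β / 2)))) →
      Tendsto (fun β => x β ^ 2 * E β) atTop (𝓝 0) := by
    intro E h0 h1
    refine squeeze_zero' (hpos.mono fun β hβ => mul_nonneg (sq_nonneg _) (h0 β hβ))
      (hpos.mono fun β hβ => ?_) tendsto_mul_exp_half
    have h3 := hxe3 β
    have h4 := hxe1 β hβ
    have h5 := Real.exp_pos (-(β / 2))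
    have h6 : 0 < x β ^ 2 := pow_pos (hx0 β) 2
    rcases h1 with h1 | h1
    · have h7 := mul_le_mul_of_nonneg_left (h1 β hβ) h6.le
      have h8 := mul_le_mul_of_nonneg_left h4 hβ.le
      nlinarith [mul_pos hβ h5]
    · have h7 := mul_le_mul_of_nonneg_left (h1 β hβ) h6.le
      refine h7.trans_eq ?_
      rw [← h3]; ring
  set e0 : ℝ → ℝ := fun β => x β ^ 2 * E0 β with he0
  set e1 : ℝ → ℝ := fun β => x β ^ 2 * E1 β with he1
  have e0l : Tendsto e0 atTop (𝓝 0) := small E0 hE0 (Or.inl fun β hβ => by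
    have := hE0' β hβ; have : 0 < β * Real.exp (β / 2) := by positivity
    linarith)
  have e1l : Tendsto e1 atTop (𝓝 0) := small E1 hE1 (Or.inr fun β hβ => by
    have := hE1' β hβ; have : 0 < 3 * β * Real.exp (3 * β / 2) := by positivity
    linarith)
  have f0l := small F0 hF0 (Or.inl hF0')
  have f1l := small F1 hF1 (Or.inr hF1')
  have e0n : ∀ β > 0, 0 ≤ e0 β := fun β hβ => mul_nonneg (sq_nonneg _) (hE0 β hβ)
  have e1n : ∀ β > 0, 0 ≤ e1 β := fun β hβ => mul_nonneg (sq_nonneg _) (hE1 β hβ)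
  set t : ℝ → ℝ := fun β => x β ^ 2 / Q β with ht
  have tp : ∀ β > 0, 0 < t β := fun β hβ => div_pos (pow_pos (hx0 β) 2) (hQ β hβ)
  have hQt : ∀ β > 0, Q β * t β = x β ^ 2 := fun β hβ => by
    have := (hQ β hβ).ne'
    simp only [ht]; field_simp
  have hU : ∀ β > 0, u β = x β / (x β + t β + e0 β) := by
    intro β hβ
    have h1 := hue β hβ
    have h2 := tp β hβ; have h3 := e0n β hβ; have h4 := hx0 β
    rw [eq_div_iff (by positivity)]
    have h5 : t β + e0 β = x β ^ 2 * (1 / Q β + E0 β) := by simp only [ht, he0]; ring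
    rw [add_assoc, h5]
    change 1 - u β = u β * x β * (1 / Q β + E0 β) at h1
    linear_combination (-x β) * h1
  have hV : ∀ β > 0, v β = 1 / (1 + x β * (t β + e1 β)) := by
    intro β hβ
    have h1 := hve β hβ
    have h2 := tp β hβ; have h3 := e1n β hβ; have h4 := hx0 β
    rw [eq_div_iff (by positivity)]
    have h5 : t β + e1 β = x β ^ 2 * (1 / Q β + E1 β) := by simp only [ht, he1]; ring
    rw [h5]
    rw [hx3] at h1
    linear_combination (-1) * h1
  have key : ∀ β > 0, 1 = (t β + e0 β) * (t β + e1 β) +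
      1 / (1 + Q β) * ((x β + t β + e0 β) * (1 + x β * (t β + e1 β))) := by
    intro β hβ
    have h1 := hs β hβ
    rw [hU β hβ, hV β hβ] at h1
    change 1 - x β / (x β + t β + e0 β) + (1 - 1 / (1 + x β * (t β + e1 β))) +
      x β / (1 + Q β) = 1 at h1
    have h2 := tp β hβ; have h3 := e1n β hβ; have h4 := hx0 β; have h5 := e0n β hβ
    have h6 := hQ β hβ
    have h7 : x β + t β + e0 β ≠ 0 := by positivity
    have h8 : 1 + x β * (t β + e1 β) ≠ 0 := by positivity
    have h9 : 1 + Q β ≠ 0 := by positivity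
    field_simp at h1 ⊢
    apply mul_left_cancel₀ h4.ne'
    linear_combination (-1) * h1
  have tle : ∀ β > 0, t β ≤ 1 := by
    intro β hβ
    have h1 := key β hβ
    have h2 := tp β hβ; have h3 := e1n β hβ; have h4 := hx0 β; have h5 := e0n β hβ
    have h6 := hQ β hβ
    have h7 : 0 ≤ 1 / (1 + Q β) * ((x β + t β + e0 β) * (1 + x β * (t β + e1 β))) := by positivity
    nlinarith [mul_nonneg h2.le h3, mul_nonneg h2.le h5, mul_nonneg h3 h5]
  have tl : Tendsto t atTop (𝓝 g) := by
    rw [tendsto_iff_norm_sub_tendsto_zero]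
    have hlim : Tendsto (fun β => (e0 β + e1 β + e0 β * e1 β) + x β ^ 2 +
        (x β + e0 β + x β * ((1 + e1 β) * (x β + 1 + e0 β)))) atTop (𝓝 0) := by
      have := (((e0l.add e1l).add (e0l.mul e1l)).add (hxl.pow 2)).add
        ((hxl.add e0l).add (hxl.mul ((e1l.const_add 1).mul ((hxl.add_const 1).add e0l))))
      simpa using this
    refine squeeze_zero' (Eventually.of_forall fun β => norm_nonneg _)
      (hpos.mono fun β hβ => ?_) hlim
    have h1 := key β hβ
    have h2 := tp β hβ; have h3 := e1n β hβ; have h4 := hx0 β; have h5 := e0n β hβ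
    have h6 := hQ β hβ
    have h7 := hQt β hβ
    have h8 := tle β hβ
    set r := 1 / (1 + Q β) with hr
    have hr0 : 0 < r := by positivity
    have hr1 : r ≤ 1 := by rw [hr, div_le_one (by positivity)]; linarith
    have hrt : r * t β = t β - r * x β ^ 2 := by
      have : r * (1 + Q β) = 1 := by rw [hr]; field_simp
      linear_combination t β * this - r * h7
    have hexp : 1 - t β - t β ^ 2 = (t β * (e0 β + e1 β) + e0 β * e1 β) - r * x β ^ 2 +
        r * (x β + e0 β + x β * ((t β + e1 β) * (x β + t β + e0 β))) := by
      linear_combination h1 + hrt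
    have b1 : 0 ≤ t β * (e0 β + e1 β) + e0 β * e1 β := by positivity
    have b2 : t β * (e0 β + e1 β) + e0 β * e1 β ≤ e0 β + e1 β + e0 β * e1 β := by
      nlinarith
    have b3 : r * x β ^ 2 ≤ x β ^ 2 := mul_le_of_le_one_left (sq_nonneg _) hr1
    have b4 : 0 ≤ r * x β ^ 2 := by positivity
    have b5 : 0 ≤ x β + e0 β + x β * ((t β + e1 β) * (x β + t β + e0 β)) := by positivity
    have b6 : x β + e0 β + x β * ((t β + e1 β) * (x β + t β + e0 β)) ≤
        x β + e0 β + x β * ((1 + e1 β) * (x β + 1 + e0 β)) := by gcongr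
    have b7 := mul_le_of_le_one_left b5 hr1
    have b8 := mul_nonneg hr0.le b5
    have habs : |1 - t β - t β ^ 2| ≤ (e0 β + e1 β + e0 β * e1 β) + x β ^ 2 +
        (x β + e0 β + x β * ((1 + e1 β) * (x β + 1 + e0 β))) := by
      rw [abs_le]
      constructor <;> linarith
    refine le_trans ?_ habs
    have hfac : 1 - t β - t β ^ 2 = -((t β - g) * (t β + g + 1)) := by
      linear_combination -hg2
    rw [hfac, abs_neg, abs_mul, Real.norm_eq_abs]
    apply le_mul_of_one_le_right (abs_nonneg _)
    rw [abs_of_pos (by positivity)]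
    linarith
  have hG : ∀ β > 0, ∀ F : ℝ, x β ^ 4 * ((1 + Q β) / Q β ^ 2 + F) =
      t β ^ 2 + x β ^ 2 * t β + x β ^ 2 * (x β ^ 2 * F) := by
    intro β hβ F
    have := (hQ β hβ).ne'
    simp only [ht]; field_simp
  have hu1 : ∀ β > 0, u β ≤ 1 := by
    intro β hβ
    have h2 := tp β hβ; have h4 := hx0 β; have h5 := e0n β hβ
    rw [hU β hβ, div_le_one (by positivity)]; linarith
  have hv1 : ∀ β > 0, v β ≤ 1 := by
    intro β hβ
    have h2 := tp β hβ; have h3 := e1n β hβ; have h4 := hx0 β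
    have : 0 ≤ x β * (t β + e1 β) := by positivity
    rw [hV β hβ, div_le_one (by positivity)]; linarith
  refine ⟨?_, ?_, ?_, ?_, ?_⟩
  · have hl : Tendsto (fun β => (t β ^ 2 + x β ^ 2 * t β + x β ^ 2 * (x β ^ 2 * F0 β)) /
        (x β + t β + e0 β) ^ 2) atTop (𝓝 ((g ^ 2 + 0 ^ 2 * g + 0 ^ 2 * 0) / (0 + g + 0) ^ 2)) :=
      (((tl.pow 2).add ((hxl.pow 2).mul tl)).add ((hxl.pow 2).mul f0l)).div
        (((hxl.add tl).add e0l).pow 2) (by simpa using hg.ne')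
    have : (g ^ 2 + 0 ^ 2 * g + 0 ^ 2 * 0) / (0 + g + 0) ^ 2 = 1 := by
      have := hg.ne'
      simp [this]
    rw [this] at hl
    refine hl.congr' (hpos.mono fun β hβ => ?_)
    change _ = u β ^ 2 * x β ^ 2 * _
    rw [← hG β hβ, hU β hβ, div_pow]
    generalize (x β + t β + e0 β) ^ 2 = D
    ring
  · have hl : Tendsto (fun β => (1 / (1 + x β * (t β + e1 β))) ^ 2 *
        (t β ^ 2 + x β ^ 2 * t β + x β ^ 2 * (x β ^ 2 * F1 β))) atTop
        (𝓝 ((1 / (1 + 0 * (g + 0))) ^ 2 * (g ^ 2 + 0 ^ 2 * g + 0 ^ 2 * 0))) :=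
      ((tendsto_const_nhds.div ((hxl.mul (tl.add e1l)).const_add 1) (by simp)).pow 2).mul
        (((tl.pow 2).add ((hxl.pow 2).mul tl)).add ((hxl.pow 2).mul f1l))
    have : (1 / (1 + 0 * (g + 0))) ^ 2 * (g ^ 2 + 0 ^ 2 * g + 0 ^ 2 * 0) = g ^ 2 := by simp
    rw [this] at hl
    refine hl.congr' (hpos.mono fun β hβ => ?_)
    change _ = v β ^ 2 * x β ^ 4 * _
    rw [← hG β hβ, hV β hβ]
    ring
  · refine squeeze_zero' (hpos.mono fun β hβ => ?_) (hpos.mono fun β hβ => ?_)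
      (by simpa using hxl.pow 2)
    · have := hQ β hβ; positivity
    · have := hQ β hβ
      exact div_le_self (sq_nonneg _) (by linarith)
  · refine squeeze_zero' (hpos.mono fun β hβ => ?_) (hpos.mono fun β hβ => ?_) hxl
    · exact mul_nonneg (hx0 β).le (hu β hβ).le
    · exact mul_le_of_le_one_right (hx0 β).le (hu1 β hβ)
  · refine squeeze_zero' (hpos.mono fun β hβ => ?_) (hpos.mono fun β hβ => ?_) hxl
    · exact mul_nonneg (hx0 β).le (hv β hβ).le
    · exact mul_le_of_le_one_right (hx0 β).le (hv1 β hβ)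

/-! ### The two letters `0` and `1` -/

/-- `letter_core` for the letter `0`, where `b = β`. -/
lemma core_zero {β P : ℝ} {H : Sig → ℝ} {ν : Measure Sig} (hE : IsEigenData 1 β P H ν)
    (hβ : 0 < β) (hRC : LocallyRingConstant H) :
    ∃ E E' : ℝ, 0 ≤ E ∧ E ≤ β * Real.exp (β / 2) ∧ 0 ≤ E' ∧ E' ≤ 2 * (β * Real.exp (β / 2)) ∧
      0 < ν.real (ringSet 0 0) ∧
      ν.real (blk 0 1) = 1 - ν.real (ringSet 0 0) ∧
      1 - ν.real (ringSet 0 0) =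
        ν.real (ringSet 0 0) * Real.exp (-β) * (1 / (Real.exp P - 1) + E) ∧
      ∫ x in blk 0 1, H x ∂ν = H (pt 0 0) * ν.real (ringSet 0 0) ^ 2 * Real.exp (-β) *
        (Real.exp P / (Real.exp P - 1) ^ 2 + E') ∧
      ∀ M : ℕ, ∫ x in blk 0 1, H x ∂ν - ∫ x in blk 0 (M + 1), H x ∂ν ≤
        M * (H (pt 0 0) * ν.real (ringSet 0 0)) := by
  have h02 : (0 : Fin 3) ≠ 2 := by decide
  have h12 : (1 : Fin 3) ≠ 2 := by decide
  have hpot : ∀ m x, x ∈ ringSet 0 m → β * pot 1 (cons 0 x) = -(β / 2 ^ (m + 1)) := by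
    intro m x hx; rw [pot_zero_ring hx]; ring
  refine letter_core (K := Real.exp (-(3 * β / 2)) * H (pt 1 1) + Real.exp (-β) * H (pt 0 0))
    (h := fun m => H (pt 0 m)) hE hβ hβ hpot (fun m => hE.H_pos _)
    (fun m hm x hx => hRC.2.1 m hm x hx _ (pt_mem_ringSet h02 m)) ?_ ?_
  · obtain ⟨C, hC⟩ := isCompact_univ.exists_bound_of_continuousOn hE.H_cont.continuousOn
    exact ⟨C, fun m => (le_abs_self _).trans (hC _ trivial)⟩
  · intro m
    have h1 := hE.eigenFun (pt 0 m)
    have hx1 : pt 0 m ∈ ringSet 1 0 := by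
      refine ⟨fun i hi => absurd hi (Nat.not_lt_zero i), ?_⟩
      simp only [pt]; split_ifs <;> decide
    have hx2 : cons 1 (pt 0 m) ∈ ringSet 1 1 := (cons_mem_ringSet 1 1 0 _).2 ⟨rfl, hx1⟩
    rw [transfer, Fin.sum_univ_three, hpot m _ (pt_mem_ringSet h02 m), cons_pt, pot_one_ring hx1,
      hRC.2.2 1 le_rfl _ hx2 _ (pt_mem_ringSet h12 1), pot_two,
      hRC.1 (cons 2 (pt 0 m)) rfl (pt 0 0) rfl] at h1
    rw [← h1, ← add_assoc]
    congr 4 <;> ring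

/-- `letter_core` for the letter `1`, where `b = 3β`. -/
lemma core_one {β P : ℝ} {H : Sig → ℝ} {ν : Measure Sig} (hE : IsEigenData 1 β P H ν)
    (hβ : 0 < β) (hRC : LocallyRingConstant H) :
    ∃ E E' : ℝ, 0 ≤ E ∧ E ≤ 3 * β * Real.exp (3 * β / 2) ∧ 0 ≤ E' ∧
      E' ≤ 2 * (3 * β * Real.exp (3 * β / 2)) ∧
      0 < ν.real (ringSet 1 0) ∧
      ν.real (blk 1 1) = 1 - ν.real (ringSet 1 0) ∧
      1 - ν.real (ringSet 1 0) =
        ν.real (ringSet 1 0) * Real.exp (-(3 * β)) * (1 / (Real.exp P - 1) + E) ∧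
      ∫ x in blk 1 1, H x ∂ν = H (pt 0 0) * ν.real (ringSet 1 0) ^ 2 * Real.exp (-(3 * β)) *
        (Real.exp P / (Real.exp P - 1) ^ 2 + E') ∧
      ∀ M : ℕ, ∫ x in blk 1 1, H x ∂ν - ∫ x in blk 1 (M + 1), H x ∂ν ≤
        M * (H (pt 0 0) * ν.real (ringSet 1 0)) := by
  have h02 : (0 : Fin 3) ≠ 2 := by decide
  have h12 : (1 : Fin 3) ≠ 2 := by decide
  have hpot : ∀ m x, x ∈ ringSet 1 m → β * pot 1 (cons 1 x) = -(3 * β / 2 ^ (m + 1)) := by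
    intro m x hx; rw [pot_one_ring hx]; ring
  have h00 : H (pt 1 0) = H (pt 0 0) := hRC.1 _ rfl _ rfl
  rw [← h00]
  refine letter_core (K := Real.exp (-(β / 2)) * H (pt 0 1) + Real.exp (-β) * H (pt 1 0))
    (h := fun m => H (pt 1 m)) hE hβ (by linarith) hpot (fun m => hE.H_pos _)
    (fun m hm x hx => hRC.2.2 m hm x hx _ (pt_mem_ringSet h12 m)) ?_ ?_
  · obtain ⟨C, hC⟩ := isCompact_univ.exists_bound_of_continuousOn hE.H_cont.continuousOn
    exact ⟨C, fun m => (le_abs_self _).trans (hC _ trivial)⟩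
  · intro m
    have h1 := hE.eigenFun (pt 1 m)
    have hx1 : pt 1 m ∈ ringSet 0 0 := by
      refine ⟨fun i hi => absurd hi (Nat.not_lt_zero i), ?_⟩
      simp only [pt]; split_ifs <;> decide
    have hx2 : cons 0 (pt 1 m) ∈ ringSet 0 1 := (cons_mem_ringSet 0 0 0 _).2 ⟨rfl, hx1⟩
    rw [transfer, Fin.sum_univ_three, hpot m _ (pt_mem_ringSet h12 m), cons_pt, pot_zero_ring hx1,
      hRC.2.1 1 le_rfl _ hx2 _ (pt_mem_ringSet h02 1), pot_two,
      hRC.1 (cons 2 (pt 1 m)) rfl (pt 1 0) rfl] at h1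
    rw [← h1, show β * -1 = -β by ring, show β * -(1 / 2 ^ (0 + 1)) = -(β / 2) by ring]
    ring

lemma univ_split : (Set.univ : Set Sig) = blk 0 1 ∪ (blk 1 1 ∪ cyl 2) := by
  ext x
  simp only [blk, cyl, Set.mem_univ, Set.mem_union, Set.mem_ofPred_eq, Nat.lt_one_iff,
    forall_eq, true_iff]
  generalize x 0 = a
  revert a; decide

lemma disj_one_two : Disjoint (blk 1 1) (cyl 2) := by
  rw [Set.disjoint_left]
  intro x hx hx'
  have h1 := hx 0 one_pos
  rw [show x 0 = 2 from hx'] at h1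
  exact absurd h1 (by decide)

lemma disj_zero : Disjoint (blk 0 1) (blk 1 1 ∪ cyl 2) := by
  rw [Set.disjoint_left]
  intro x hx hx'
  have h1 := hx 0 one_pos
  rcases hx' with hx' | hx'
  · rw [hx' 0 one_pos] at h1; exact absurd h1 (by decide)
  · rw [show x 0 = 2 from hx'] at h1; exact absurd h1 (by decide)

lemma isClopen_cyl_two : IsClopen (cyl 2) := isClopen_coord 0 2

lemma integral_split {ν : Measure Sig} [IsProbabilityMeasure ν] {f : Sig → ℝ}
    (hf : Continuous f) : ∫ x, f x ∂ν =
      ∫ x in blk 0 1, f x ∂ν + (∫ x in blk 1 1, f x ∂ν + ∫ x in cyl 2, f x ∂ν) := by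
  have hi : ∀ s, IntegrableOn f s ν := fun s => (integrable_of_cont hf).integrableOn
  rw [← setIntegral_univ, univ_split, setIntegral_union disj_zero
    ((isClopen_blk 1 1).union isClopen_cyl_two).isOpen.measurableSet (hi _) (hi _),
    setIntegral_union disj_one_two isClopen_cyl_two.isOpen.measurableSet (hi _) (hi _)]

/-! ### Passage to the weak limit -/

lemma integral_gibbs {ν : Measure Sig} [IsProbabilityMeasure ν] {H : Sig → ℝ}
    (hH : Continuous H) (hpos : ∀ x, 0 < H x) (f : Sig → ℝ) :
    ∫ x, f x ∂(gibbs H ν) = (∫ x, f x * H x ∂ν) / ∫ x, H x ∂ν := by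
  have hm : Measurable fun x => ENNReal.ofReal (H x) := hH.measurable.ennreal_ofReal
  rw [gibbs, integral_smul_measure, integral_withDensity_eq_integral_toReal_smul hm
    (Eventually.of_forall fun x => ENNReal.ofReal_lt_top), withDensity_apply _ MeasurableSet.univ,
    Measure.restrict_univ, ← ofReal_integral_eq_lintegral_ofReal (integrable_of_cont hH)
      (Eventually.of_forall fun x => (hpos x).le), ENNReal.toReal_inv,
    ENNReal.toReal_ofReal (integral_nonneg fun x => (hpos x).le), smul_eq_mul, div_eq_inv_mul]
  congr 2
  funext x
  rw [ENNReal.toReal_ofReal (hpos x).le, smul_eq_mul, mul_comm]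

lemma exists_blk_close {f : Sig → ℝ} (hf : Continuous f) (a : Fin 3) {ε : ℝ} (hε : 0 < ε) :
    ∃ M : ℕ, ∀ x ∈ blk a (M + 1), |f x - f (fun _ => a)| ≤ ε := by
  by_contra! hcon
  choose y hy hy' using hcon
  have hlim : Tendsto y atTop (𝓝 (fun _ => a)) := by
    rw [tendsto_pi_nhds]
    intro i
    refine tendsto_const_nhds.congr' ?_
    filter_upwards [eventually_ge_atTop i] with M hM
    exact (hy M i (by omega)).symm
  have h1 := (hf.tendsto (fun _ => a)).comp hlim
  obtain ⟨M, hM⟩ := (Metric.tendsto_nhds.1 h1 ε hε).exists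
  rw [Real.dist_eq] at hM
  exact absurd hM (not_lt.2 (hy' M).le)

/-- If the mass of `[a]`, rescaled by `w`, converges and concentrates on `[a^(M+1)]` for every `M`,
then the rescaled integral of `f` over `[a]` only sees the value of `f` at `a^∞`. -/
lemma concentrate {H : ℝ → Sig → ℝ} {ν : ℝ → Measure Sig} {w : ℝ → ℝ} (a : Fin 3) {L : ℝ}
    (hp : ∀ β > 0, IsProbabilityMeasure (ν β)) (hc : ∀ β > 0, Continuous (H β))
    (hpos : ∀ β > 0, ∀ x, 0 < H β x) (hw : ∀ β > 0, 0 < w β)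
    (hL : Tendsto (fun β => w β * ∫ x in blk a 1, H β x ∂(ν β)) atTop (𝓝 L))
    (hM : ∀ M : ℕ, Tendsto (fun β => w β * (∫ x in blk a 1, H β x ∂(ν β) -
      ∫ x in blk a (M + 1), H β x ∂(ν β))) atTop (𝓝 0))
    {f : Sig → ℝ} (hf : Continuous f) {C : ℝ} (hC : ∀ x, |f x| ≤ C) :
    Tendsto (fun β => w β * ∫ x in blk a 1, f x * H β x ∂(ν β)) atTop
      (𝓝 (f (fun _ => a) * L)) := by
  set y : Sig := fun _ => a with hy
  -- it suffices that the difference with `f y` times the rescaled mass vanishes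
  have hmain : Tendsto (fun β => w β * ∫ x in blk a 1, f x * H β x ∂(ν β) -
      f y * (w β * ∫ x in blk a 1, H β x ∂(ν β))) atTop (𝓝 0) := by
    rw [Metric.tendsto_nhds]
    intro ε hε
    set δ := ε / (2 * (|L| + 1)) with hδ
    have hδ0 : 0 < δ := by positivity
    obtain ⟨M, hMc⟩ := exists_blk_close hf a hδ0
    have hlim : Tendsto (fun β => δ * (w β * ∫ x in blk a 1, H β x ∂(ν β)) + 2 * C *
        (w β * (∫ x in blk a 1, H β x ∂(ν β) - ∫ x in blk a (M + 1), H β x ∂(ν β))))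
        atTop (𝓝 (δ * L)) := by
      simpa using (hL.const_mul δ).add ((hM M).const_mul (2 * C))
    have hlt : δ * L < ε := by
      have h1 : δ * (2 * (|L| + 1)) = ε := by rw [hδ]; field_simp
      nlinarith [le_abs_self L, abs_nonneg L]
    filter_upwards [hlim.eventually_lt_const hlt, eventually_gt_atTop 0] with β h1 hβ
    rw [Real.dist_eq, sub_zero]
    refine lt_of_le_of_lt ?_ h1
    have := hp β hβ
    have hHc := hc β hβ
    have hi : ∀ s, IntegrableOn (H β) s (ν β) := fun s => (integrable_of_cont hHc).integrableOn
    have hsub : blk a (M + 1) ⊆ blk a 1 := fun x hx i hi => hx i (by omega)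
    have hm1 := (isClopen_blk a (M + 1)).isOpen.measurableSet
    have hm0 := (isClopen_blk a 1).isOpen.measurableSet
    have hdiff := setIntegral_sdiff (μ := ν β) hm1 (hi _) hsub
    have hcg : Continuous fun x => (f x - f y) * H β x := by fun_prop
    have hig : ∀ s, IntegrableOn (fun x => (f x - f y) * H β x) s (ν β) :=
      fun s => (integrable_of_cont hcg).integrableOn
    have heq : w β * ∫ x in blk a 1, f x * H β x ∂(ν β) -
        f y * (w β * ∫ x in blk a 1, H β x ∂(ν β)) =
        w β * (∫ x in blk a 1 \ blk a (M + 1), (f x - f y) * H β x ∂(ν β) +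
          ∫ x in blk a (M + 1), (f x - f y) * H β x ∂(ν β)) := by
      rw [setIntegral_sdiff hm1 (hig _) hsub, sub_add_cancel]
      simp_rw [sub_mul]
      rw [integral_sub (f := fun x => f x * H β x) (integrable_of_cont (hf.mul hHc)).integrableOn
        ((hi _).const_mul _), integral_const_mul]
      ring
    have b1 : |∫ x in blk a 1 \ blk a (M + 1), (f x - f y) * H β x ∂(ν β)| ≤
        2 * C * (∫ x in blk a 1, H β x ∂(ν β) - ∫ x in blk a (M + 1), H β x ∂(ν β)) := by
      rw [← hdiff, ← integral_const_mul, ← Real.norm_eq_abs]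
      refine norm_integral_le_of_norm_le ((hi _).const_mul _) (Eventually.of_forall fun x => ?_)
      rw [Real.norm_eq_abs, abs_mul, abs_of_pos (hpos β hβ x)]
      refine mul_le_mul_of_nonneg_right ?_ (hpos β hβ x).le
      have := abs_sub (f x) (f y)
      have := hC x; have := hC y
      linarith
    have b2 : |∫ x in blk a (M + 1), (f x - f y) * H β x ∂(ν β)| ≤
        δ * ∫ x in blk a 1, H β x ∂(ν β) := by
      have : |∫ x in blk a (M + 1), (f x - f y) * H β x ∂(ν β)| ≤
          δ * ∫ x in blk a (M + 1), H β x ∂(ν β) := by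
        rw [← integral_const_mul, ← Real.norm_eq_abs]
        refine norm_integral_le_of_norm_le ((hi _).const_mul _) ?_
        filter_upwards [ae_restrict_mem hm1] with x hx
        rw [Real.norm_eq_abs, abs_mul, abs_of_pos (hpos β hβ x)]
        exact mul_le_mul_of_nonneg_right (hMc x hx) (hpos β hβ x).le
      refine this.trans (mul_le_mul_of_nonneg_left ?_ hδ0.le)
      exact setIntegral_mono_set (hi _) (Eventually.of_forall fun x => (hpos β hβ x).le)
        (Eventually.of_forall hsub)
    rw [heq, abs_mul, abs_of_pos (hw β hβ)]
    have b3 := (abs_add_le _ _).trans (add_le_add b1 b2)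
    refine (mul_le_mul_of_nonneg_left b3 (hw β hβ).le).trans_eq ?_
    ring
  have := hmain.add (hL.const_mul (f y))
  simpa using this

/-- For `α = 1`, the Gibbs measures `μ_β` converge weakly to
`(1/(1+ρ²))·(ρ²·δ_{0^∞} + δ_{1^∞})` where `ρ = (1+√5)/2` is the golden mean. -/
theorem gibbs_weak_limit_alpha_eq_one (α : ℝ) (hα : α = 1)
    (P : ℝ → ℝ) (H : ℝ → Sig → ℝ) (ν : ℝ → Measure Sig)
    (hE : ∀ β > (0 : ℝ), IsEigenData α β (P β) (H β) (ν β))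
    (hRC : ∀ β > (0 : ℝ), LocallyRingConstant (H β)) :
    WeakLimit (fun β => gibbs (H β) (ν β))
      (ENNReal.ofReal (1 / (1 + ((1 + Real.sqrt 5) / 2) ^ 2)) •
        (ENNReal.ofReal (((1 + Real.sqrt 5) / 2) ^ 2) • Measure.dirac zeroSeq +
          Measure.dirac oneSeq)) := by
  subst hα
  intro f hf ⟨C, hC⟩
  have hp : ∀ β > 0, IsProbabilityMeasure (ν β) := fun β hβ => (hE β hβ).prob
  have h0 : ∀ β : ℝ, ∃ E E' : ℝ, 0 < β → _ := fun β => by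
    by_cases hβ : 0 < β
    · obtain ⟨E, E', h⟩ := core_zero (hE β hβ) hβ (hRC β hβ)
      exact ⟨E, E', fun _ => h⟩
    · exact ⟨0, 0, fun h => absurd h hβ⟩
  have h1 : ∀ β : ℝ, ∃ E E' : ℝ, 0 < β → _ := fun β => by
    by_cases hβ : 0 < β
    · obtain ⟨E, E', h⟩ := core_one (hE β hβ) hβ (hRC β hβ)
      exact ⟨E, E', fun _ => h⟩
    · exact ⟨0, 0, fun h => absurd h hβ⟩
  choose E0 F0 h0 using h0
  choose E1 F1 h1 using h1
  set g : ℝ := (Real.sqrt 5 - 1) / 2 with hg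
  have h5 : Real.sqrt 5 ^ 2 = 5 := Real.sq_sqrt (by norm_num)
  have h5' : 1 < Real.sqrt 5 := by
    rw [Real.lt_sqrt (by norm_num)]; norm_num
  have hg0 : 0 < g := by rw [hg]; linarith
  have hg2 : g ^ 2 + g = 1 := by rw [hg]; linear_combination h5 / 4
  have hQ : ∀ β > 0, 0 < Real.exp (P β) - 1 := fun β hβ => by
    have := Real.add_one_lt_exp (hE β hβ).P_pos.ne'
    have := (hE β hβ).P_pos
    linarith
  have hQ1 : ∀ β, 1 + (Real.exp (P β) - 1) = Real.exp (P β) := fun β => by ring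
  have htwo : ∀ β > 0, (ν β).real (cyl 2) = Real.exp (-β) / Real.exp (P β) := fun β hβ => by
    rw [eq_div_iff (Real.exp_pos _).ne', mul_comm]
    exact measure_two (hE β hβ)
  obtain ⟨lA, lB, lC, lD, lE⟩ := limits (Q := fun β => Real.exp (P β) - 1)
    (u := fun β => (ν β).real (ringSet 0 0)) (v := fun β => (ν β).real (ringSet 1 0))
    (E0 := E0) (E1 := E1) (F0 := F0) (F1 := F1) hQ
    (fun β hβ => (h0 β hβ).2.2.2.2.1) (fun β hβ => (h1 β hβ).2.2.2.2.1)
    (fun β hβ => (h0 β hβ).1) (fun β hβ => (h0 β hβ).2.1)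
    (fun β hβ => (h1 β hβ).1) (fun β hβ => (h1 β hβ).2.1)
    (fun β hβ => (h0 β hβ).2.2.1) (fun β hβ => (h0 β hβ).2.2.2.1)
    (fun β hβ => (h1 β hβ).2.2.1) (fun β hβ => (h1 β hβ).2.2.2.1)
    (fun β hβ => (h0 β hβ).2.2.2.2.2.2.1) (fun β hβ => (h1 β hβ).2.2.2.2.2.2.1)
    (fun β hβ => by
      have := hp β hβ
      simp only [hQ1]
      rw [← htwo β hβ, ← (h0 β hβ).2.2.2.2.2.1, ← (h1 β hβ).2.2.2.2.2.1, add_assoc,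
        ← measureReal_union disj_one_two isClopen_cyl_two.isOpen.measurableSet,
        ← measureReal_union disj_zero
          ((isClopen_blk 1 1).union isClopen_cyl_two).isOpen.measurableSet, ← univ_split]
      simp) hg0 hg2
  -- all masses are rescaled by `e^{-β} / H|_[2]`
  set w : ℝ → ℝ := fun β => Real.exp (-β) / H β (pt 0 0) with hw
  have hcp : ∀ β > 0, 0 < H β (pt 0 0) := fun β hβ => (hE β hβ).H_pos _
  have hw0 : ∀ β > 0, 0 < w β := fun β hβ => div_pos (Real.exp_pos _) (hcp β hβ)
  have hpos : ∀ᶠ β : ℝ in atTop, 0 < β := eventually_gt_atTop 0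
  have hx3 : ∀ β : ℝ, Real.exp (-(3 * β)) = Real.exp (-β) ^ 3 := by
    intro β; rw [← Real.exp_nat_mul]; congr 1; push_cast; ring
  have J0 : Tendsto (fun β => w β * ∫ x in blk 0 1, H β x ∂(ν β)) atTop (𝓝 1) := by
    refine lA.congr' (hpos.mono fun β hβ => ?_)
    have := (hcp β hβ).ne'
    have h2 := (h0 β hβ).2.2.2.2.2.2.2.1
    simp only [hw, hQ1, h2]
    field_simp
  have J1 : Tendsto (fun β => w β * ∫ x in blk 1 1, H β x ∂(ν β)) atTop (𝓝 (g ^ 2)) := by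
    refine lB.congr' (hpos.mono fun β hβ => ?_)
    have := (hcp β hβ).ne'
    have h2 := (h1 β hβ).2.2.2.2.2.2.2.1
    simp only [hw, hQ1, h2, hx3]
    field_simp
  have M0 : ∀ M : ℕ, Tendsto (fun β => w β * (∫ x in blk 0 1, H β x ∂(ν β) -
      ∫ x in blk 0 (M + 1), H β x ∂(ν β))) atTop (𝓝 0) := by
    intro M
    refine squeeze_zero' (hpos.mono fun β hβ => ?_) (hpos.mono fun β hβ => ?_)
      (by simpa using lD.const_mul (M : ℝ))
    · have := hp β hβ
      refine mul_nonneg (hw0 β hβ).le (sub_nonneg.2 ?_)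
      exact setIntegral_mono_set (integrable_of_cont (hE β hβ).H_cont).integrableOn
        (Eventually.of_forall fun x => ((hE β hβ).H_pos x).le)
        (Eventually.of_forall fun x hx i hi => hx i (by omega))
    · have h2 := (h0 β hβ).2.2.2.2.2.2.2.2 M
      refine (mul_le_mul_of_nonneg_left h2 (hw0 β hβ).le).trans_eq ?_
      have := (hcp β hβ).ne'
      simp only [hw]; field_simp
  have M1 : ∀ M : ℕ, Tendsto (fun β => w β * (∫ x in blk 1 1, H β x ∂(ν β) -
      ∫ x in blk 1 (M + 1), H β x ∂(ν β))) atTop (𝓝 0) := by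
    intro M
    refine squeeze_zero' (hpos.mono fun β hβ => ?_) (hpos.mono fun β hβ => ?_)
      (by simpa using lE.const_mul (M : ℝ))
    · have := hp β hβ
      refine mul_nonneg (hw0 β hβ).le (sub_nonneg.2 ?_)
      exact setIntegral_mono_set (integrable_of_cont (hE β hβ).H_cont).integrableOn
        (Eventually.of_forall fun x => ((hE β hβ).H_pos x).le)
        (Eventually.of_forall fun x hx i hi => hx i (by omega))
    · have h2 := (h1 β hβ).2.2.2.2.2.2.2.2 M
      refine (mul_le_mul_of_nonneg_left h2 (hw0 β hβ).le).trans_eq ?_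
      have := (hcp β hβ).ne'
      simp only [hw]; field_simp
  have hcont : ∀ β > 0, Continuous (H β) := fun β hβ => (hE β hβ).H_cont
  have hHpos : ∀ β > 0, ∀ x, 0 < H β x := fun β hβ => (hE β hβ).H_pos
  have J2 : ∀ f' : Sig → ℝ, Continuous f' → ∀ D : ℝ, (∀ x, |f' x| ≤ D) →
      Tendsto (fun β => w β * ∫ x in cyl 2, f' x * H β x ∂(ν β)) atTop (𝓝 0) := by
    intro f' hf' D hD
    refine squeeze_zero_norm' (hpos.mono fun β hβ => ?_) (by simpa using lC.const_mul D)
    have := hp β hβ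
    have h2 : ‖∫ x in cyl 2, f' x * H β x ∂(ν β)‖ ≤ D * H β (pt 0 0) * (ν β).real (cyl 2) := by
      refine norm_setIntegral_le_of_norm_le_const (measure_lt_top _ _) fun x hx => ?_
      rw [(hRC β hβ).1 x hx (pt 0 0) rfl, norm_mul, Real.norm_eq_abs, Real.norm_eq_abs,
        abs_of_pos (hcp β hβ)]
      exact mul_le_mul_of_nonneg_right (hD x) (hcp β hβ).le
    rw [norm_mul, Real.norm_eq_abs, abs_of_pos (hw0 β hβ)]
    refine (mul_le_mul_of_nonneg_left h2 (hw0 β hβ).le).trans_eq ?_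
    have := (hcp β hβ).ne'
    simp only [htwo β hβ, hw]; field_simp
  have lim : ∀ f' : Sig → ℝ, Continuous f' → ∀ D : ℝ, (∀ x, |f' x| ≤ D) →
      Tendsto (fun β => w β * ∫ x, f' x * H β x ∂(ν β)) atTop
        (𝓝 (f' zeroSeq + f' oneSeq * g ^ 2)) := by
    intro f' hf' D hD
    have a0 := concentrate 0 hp hcont hHpos hw0 J0 M0 hf' hD
    have a1 := concentrate 1 hp hcont hHpos hw0 J1 M1 hf' hD
    have a2 := a0.add (a1.add (J2 f' hf' D hD))
    have e : f' (fun _ => 0) * 1 + (f' (fun _ => 1) * g ^ 2 + 0) =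
        f' zeroSeq + f' oneSeq * g ^ 2 := by
      rw [mul_one, add_zero]; rfl
    rw [e] at a2
    refine a2.congr' (hpos.mono fun β hβ => ?_)
    have := hp β hβ
    change _ = w β * ∫ x, f' x * H β x ∂(ν β)
    rw [integral_split (ν := ν β) (f := fun x => f' x * H β x) (hf'.mul (hcont β hβ))]
    ring
  have hnum := lim f hf C hC
  have hden := lim (fun _ => 1) continuous_const 1 (by simp)
  have hquot := hnum.div hden (by positivity)
  have hval : ∫ x, f x ∂(ENNReal.ofReal (1 / (1 + ((1 + Real.sqrt 5) / 2) ^ 2)) •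
      (ENNReal.ofReal (((1 + Real.sqrt 5) / 2) ^ 2) • Measure.dirac zeroSeq +
        Measure.dirac oneSeq)) = (f zeroSeq + f oneSeq * g ^ 2) / (1 + 1 * g ^ 2) := by
    rw [integral_smul_measure, integral_add_measure, integral_smul_measure, integral_dirac,
      integral_dirac, ENNReal.toReal_ofReal (by positivity), ENNReal.toReal_ofReal (by positivity),
      smul_eq_mul, smul_eq_mul]
    · set ρ := (1 + Real.sqrt 5) / 2 with hρ
      have hρg : ρ * g = 1 := by rw [hρ, hg]; linear_combination h5 / 4
      have hρ0 : 0 < ρ := by positivity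
      have : g = 1 / ρ := by rw [eq_div_iff hρ0.ne', mul_comm]; exact hρg
      rw [this]
      field_simp
      ring
    · exact (integrable_of_cont hf).smul_measure ENNReal.ofReal_ne_top
    · exact integrable_of_cont hf
  rw [hval]
  refine hquot.congr' (hpos.mono fun β hβ => ?_)
  have := hp β hβ
  simp only [Pi.div_apply]
  rw [integral_gibbs (hcont β hβ) (hHpos β hβ), mul_div_mul_left _ _ (hw0 β hβ).ne']
  simp

end
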